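/- arXiv:2107.13698 — 2 statements merged into one kernel-verified Lean document; each statement's English description precedes it below -/
import Mathlib

section
/- Let (𝒜, ℬ, 𝒞) be a recollement of abelian categories. If i^* is exact, then j_! is exact; that is, j_! (which, being a left adjoint, is automatically right exact) also preserves finite limits. -/
open CategoryTheory CategoryTheory.Limits

/-- A recollement of abelian categories. -/
structure AbelianRecollement (𝒜 : Type*) (ℬ : Type*) (𝒞 : Type*)
    [Category 𝒜] [Category ℬ] [Category 𝒞]
    [Abelian 𝒜] [Abelian ℬ] [Abelian 𝒞] where
  /-- i^* : ℬ ⥤ 𝒜 -/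
  iStar : ℬ ⥤ 𝒜
  /-- i_* : 𝒜 ⥤ ℬ -/
  iLow : 𝒜 ⥤ ℬ
  /-- i^! : ℬ ⥤ 𝒜 -/
  iShriek : ℬ ⥤ 𝒜
  /-- j_! : 𝒞 ⥤ ℬ -/
  jShriek : 𝒞 ⥤ ℬ
  /-- j^* : ℬ ⥤ 𝒞 -/
  jStar : ℬ ⥤ 𝒞
  /-- j_* : 𝒞 ⥤ ℬ -/
  jLow : 𝒞 ⥤ ℬ
  iStar_additive : iStar.Additive
  iLow_additive : iLow.Additive
  iShriek_additive : iShriek.Additive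
  jShriek_additive : jShriek.Additive
  jStar_additive : jStar.Additive
  jLow_additive : jLow.Additive
  /-- (i^*, i_*) is an adjoint pair -/
  adj₁ : iStar ⊣ iLow
  /-- (i_*, i^!) is an adjoint pair -/
  adj₂ : iLow ⊣ iShriek
  /-- (j_!, j^*) is an adjoint pair -/
  adj₃ : jShriek ⊣ jStar
  /-- (j^*, j_*) is an adjoint pair -/
  adj₄ : jStar ⊣ jLow
  iLow_full : iLow.Full
  iLow_faithful : iLow.Faithful
  jShriek_full : jShriek.Full
  jShriek_faithful : jShriek.Faithful
  jLow_full : jLow.Full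
  jLow_faithful : jLow.Faithful
  /-- j^* ∘ i_* = 0 -/
  jStar_iLow_zero : ∀ A : 𝒜, IsZero (jStar.obj (iLow.obj A))
  /-- i_* is exact -/
  iLow_preservesFiniteLimits : PreservesFiniteLimits iLow
  iLow_preservesFiniteColimits : PreservesFiniteColimits iLow
  /-- j^* is exact -/
  jStar_preservesFiniteLimits : PreservesFiniteLimits jStar
  jStar_preservesFiniteColimits : PreservesFiniteColimits jStar
  /-- the composite i_* i^! X ⟶ X ⟶ j_* j^* X vanishes -/
  comp_zero₁ : ∀ X : ℬ, adj₂.counit.app X ≫ adj₄.unit.app X = 0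
  /-- the sequence 0 ⟶ i_* i^! X ⟶ X ⟶ j_* j^* X is exact: the counit is a kernel of the
  unit -/
  exact₁ : ∀ X : ℬ, Nonempty (IsLimit (KernelFork.ofι (adj₂.counit.app X) (comp_zero₁ X)))
  /-- the composite j_! j^* X ⟶ X ⟶ i_* i^* X vanishes -/
  comp_zero₂ : ∀ X : ℬ, adj₃.counit.app X ≫ adj₁.unit.app X = 0
  /-- the sequence j_! j^* X ⟶ X ⟶ i_* i^* X ⟶ 0 is exact: the unit is a cokernel of the
  counit -/
  exact₂ : ∀ X : ℬ, Nonempty (IsColimit (CokernelCofork.ofπ (adj₁.unit.app X) (comp_zero₂ X)))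

/-!
The functors `i^*` and `j^*` jointly reflect zero objects: if `j^* X = 0` then `X ⟶ i_* i^* X` is
an isomorphism, its kernel being covered by `j_! j^* X`. When `i^*` is exact they therefore jointly
reflect monomorphisms, as one sees on kernels. For a monomorphism `f` in `𝒞`, the morphism
`j^* j_! f` is `f` up to isomorphism, and `i^* j_! f` is a morphism out of `0`, since `i^* j_!` is
left adjoint to `j^* i_* = 0`. So `j_!` preserves monomorphisms, and it is right exact.
-/

section Functors

variable {C D : Type*} [Category C] [Category D]

lemma isZero_obj_kernel_of_mono_map [HasZeroMorphisms C] [HasZeroMorphisms D] (F : C ⥤ D)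
    [F.PreservesZeroMorphisms] [F.PreservesMonomorphisms] {X Y : C} (f : X ⟶ Y) [HasKernel f]
    [Mono (F.map f)] : IsZero (F.obj (kernel f)) := by
  have h : F.map (kernel.ι f ≫ f) = 0 := by rw [kernel.condition, F.map_zero]
  rw [F.map_comp] at h
  exact IsZero.of_mono_eq_zero _ h

lemma mono_of_mono_map_of_jointly_reflect_isZero {E : Type*} [Category E] [Preadditive C]
    [HasKernels C] [HasZeroMorphisms D] [HasZeroMorphisms E] (F : C ⥤ D) (G : C ⥤ E)
    [F.PreservesZeroMorphisms] [F.PreservesMonomorphisms]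
    [G.PreservesZeroMorphisms] [G.PreservesMonomorphisms]
    (hzero : ∀ X, IsZero (F.obj X) → IsZero (G.obj X) → IsZero X)
    {X Y : C} (f : X ⟶ Y) [Mono (F.map f)] [Mono (G.map f)] : Mono f :=
  Preadditive.mono_of_isZero_kernel f <|
    hzero _ (isZero_obj_kernel_of_mono_map F f) (isZero_obj_kernel_of_mono_map G f)

lemma preservesFiniteLimits_of_preservesFiniteColimits_of_preservesMonomorphisms
    [Abelian C] [Abelian D] (F : C ⥤ D) [PreservesFiniteColimits F] [F.PreservesMonomorphisms] :
    PreservesFiniteLimits F := by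
  have := preservesBinaryBiproducts_of_preservesBinaryCoproducts F
  have : F.Additive := Functor.additive_of_preservesBinaryBiproducts F
  have : F.PreservesHomology := Functor.preservesHomology_of_preservesMonos_and_cokernels F
  exact F.preservesFiniteLimits_of_preservesHomology

end Functors

section Adjunctions

variable {C D : Type*} [Category C] [Category D] {F : C ⥤ D} {G : D ⥤ C}

lemma isZero_leftAdjoint_obj_of_isZero_rightAdjoint_obj [HasZeroMorphisms D] (adj : F ⊣ G) {X : C}
    (hX : IsZero (G.obj (F.obj X))) : IsZero (F.obj X) := by
  rw [IsZero.iff_id_eq_zero]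
  exact (adj.homEquiv _ _).injective (hX.eq_of_tgt _ _)

lemma mono_rightAdjoint_map_leftAdjoint_map [F.Full] [F.Faithful] (adj : F ⊣ G) {X Y : C}
    (f : X ⟶ Y) [Mono f] : Mono (G.map (F.map f)) := by
  have : (F ⋙ G).PreservesMonomorphisms :=
    Functor.PreservesMonomorphisms.of_iso (asIso adj.unit)
  exact (F ⋙ G).map_mono f

end Adjunctions

namespace AbelianRecollement

variable {𝒜 ℬ 𝒞 : Type*} [Category 𝒜] [Category ℬ] [Category 𝒞]
  [Abelian 𝒜] [Abelian ℬ] [Abelian 𝒞] (R : AbelianRecollement 𝒜 ℬ 𝒞)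

attribute [instance] iStar_additive iLow_additive jShriek_full jShriek_faithful

lemma isZero_iStar_obj_jShriek_obj (Z : 𝒞) : IsZero (R.iStar.obj (R.jShriek.obj Z)) :=
  isZero_leftAdjoint_obj_of_isZero_rightAdjoint_obj (R.adj₃.comp R.adj₁)
    (R.jStar_iLow_zero _)

lemma isZero_of_isZero_iStar_obj_of_isZero_jStar_obj (X : ℬ)
    (hi : IsZero (R.iStar.obj X)) (hj : IsZero (R.jStar.obj X)) : IsZero X := by
  obtain ⟨hcoker⟩ := R.exact₂ X
  have hcounit : R.adj₃.counit.app X = 0 := (R.jShriek.map_isZero hj).eq_of_src _ _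
  have : IsIso (R.adj₁.unit.app X) := CokernelCofork.IsColimit.isIso_π _ hcoker hcounit
  exact (R.iLow.map_isZero hi).of_iso (asIso (R.adj₁.unit.app X))

end AbelianRecollement

theorem stmt7_general {𝒜 ℬ 𝒞 : Type*} [Category 𝒜] [Category ℬ] [Category 𝒞]
    [HasZeroMorphisms 𝒜] [Abelian ℬ] [Abelian 𝒞]
    {jShriek : 𝒞 ⥤ ℬ} {jStar : ℬ ⥤ 𝒞} [jShriek.Full] [jShriek.Faithful] (adj : jShriek ⊣ jStar)
    (iStar : ℬ ⥤ 𝒜) [iStar.PreservesZeroMorphisms] [iStar.PreservesMonomorphisms]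
    (hcomp : ∀ Z, IsZero (iStar.obj (jShriek.obj Z)))
    (hzero : ∀ X, IsZero (iStar.obj X) → IsZero (jStar.obj X) → IsZero X) :
    PreservesFiniteLimits jShriek := by
  have := adj.isLeftAdjoint
  have := adj.isRightAdjoint
  have : jShriek.PreservesMonomorphisms := by
    refine ⟨fun {Z _} f _ ↦ ?_⟩
    have : Mono (iStar.map (jShriek.map f)) := (hcomp Z).mono _
    have : Mono (jStar.map (jShriek.map f)) := mono_rightAdjoint_map_leftAdjoint_map adj f
    exact mono_of_mono_map_of_jointly_reflect_isZero iStar jStar hzero (jShriek.map f)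
  exact preservesFiniteLimits_of_preservesFiniteColimits_of_preservesMonomorphisms jShriek

/-- In a recollement of abelian categories, if `i^*` is exact then `j_!` is exact, i.e. `j_!`
also preserves finite limits. -/
theorem stmt7 {𝒜 ℬ 𝒞 : Type*} [Category 𝒜] [Category ℬ] [Category 𝒞]
    [Abelian 𝒜] [Abelian ℬ] [Abelian 𝒞]
    (R : AbelianRecollement 𝒜 ℬ 𝒞)
    (h₁ : PreservesFiniteLimits R.iStar) (h₂ : PreservesFiniteColimits R.iStar) :
    PreservesFiniteLimits R.jShriek := by
  exact stmt7_general R.adj₃ R.iStar R.isZero_iStar_obj_jShriek_obj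
    R.isZero_of_isZero_iStar_obj_of_isZero_jStar_obj
end

section
/- Let (𝒜, ℬ, 𝒞) be a recollement of abelian categories and suppose 𝒞 has enough projective objects. Let 𝒳 be the full subcategory of ℬ consisting of the objects B such that Hom_ℬ(B, i_*(A)) = 0 for every object A of 𝒜 and every short exact sequence 0 → i_*(A) → E → B → 0 in ℬ splits. Then the restriction of j^* to 𝒳 is fully faithful and essentially surjective, i.e., j^* induces an equivalence of categories 𝒳 ≃ 𝒞. -/
open CategoryTheory CategoryTheory.Limits

/-!
The objects of `𝒳` are those left orthogonal, for both `Hom` and `Ext¹`, to the kernel of `j^*`,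
because this kernel is the essential image of `i_*`. More generally, let `L ⊣ G` be an adjunction
between abelian categories with `L` fully faithful and `G` exact, and consider the objects with no
`Hom` and no `Ext¹` to `ker G`. They include every `L.obj C`, since a morphism out of `L.obj C`
lifts uniquely along any morphism inverted by `G`. Conversely, the counit `L (G B) ⟶ B` is inverted
by `G`, so its kernel and cokernel lie in `ker G`; when `B` is such an object, the cokernel vanishes
by the condition on `Hom`, and then the kernel is a direct summand of `L (G B)`, hence zero. So
these objects form the essential image of `L`, on which `G` is an inverse of `L`.
-/

section LeftPerpendicular

variable {𝒟 : Type*} [Category 𝒟]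

/-- The left perpendicular `⊥Q` of a property of objects `Q`, consisting of the objects `B` with
`Hom(B, K) = 0` and `Ext¹(B, K) = 0` for all `K` in `Q`. The vanishing of `Ext¹` is expressed as the
splitting of all extensions of `B` by `K`, so that no `Ext` groups need to exist in `𝒟`. -/
def leftPerpendicular [HasZeroMorphisms 𝒟] (Q : ObjectProperty 𝒟) : ObjectProperty 𝒟 := fun B =>
  Q.leftOrthogonal B ∧
    ∀ ⦃K E : 𝒟⦄ (f : K ⟶ E) (g : E ⟶ B) (w : f ≫ g = 0), Q K →
      (ShortComplex.mk f g w).ShortExact → IsSplitEpi g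

lemma leftPerpendicular_essImage_iff [HasZeroMorphisms 𝒟] {𝒜 : Type*} [Category 𝒜] (F : 𝒜 ⥤ 𝒟)
    (B : 𝒟) :
    leftPerpendicular F.essImage B ↔
      (∀ (A : 𝒜) (f : B ⟶ F.obj A), f = 0) ∧
        ∀ (A : 𝒜) (E : 𝒟) (f : F.obj A ⟶ E) (g : E ⟶ B) (w : f ≫ g = 0),
          (ShortComplex.mk f g w).ShortExact → ∃ s : B ⟶ E, s ≫ g = 𝟙 B := by
  constructor
  · rintro ⟨hom_zero, split⟩
    refine ⟨fun A f => hom_zero f (F.obj_mem_essImage A), fun A E f g w hS => ?_⟩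
    have := split f g w (F.obj_mem_essImage A) hS
    exact ⟨section_ g, IsSplitEpi.id g⟩
  · rintro ⟨hom_zero, split⟩
    refine ⟨fun K f ⟨A, ⟨e⟩⟩ => ?_, fun K E f g w ⟨A, ⟨e⟩⟩ hS => ?_⟩
    · exact (cancel_mono e.inv).1 ((hom_zero A _).trans zero_comp.symm)
    · let φ : ShortComplex.mk f g w ≅ ShortComplex.mk (e.hom ≫ f) g (by simp [w]) :=
        ShortComplex.isoMk e.symm (Iso.refl _) (Iso.refl _)
      obtain ⟨s, hs⟩ := split A E _ g _ (ShortComplex.shortExact_of_iso φ hS)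
      exact ⟨⟨s, hs⟩⟩

lemma isIso_of_leftOrthogonal_of_leftPerpendicular [Abelian 𝒟] {Q : ObjectProperty 𝒟} {X B : 𝒟}
    (hX : Q.leftOrthogonal X) (hB : leftPerpendicular Q B) (f : X ⟶ B) (hker : Q (kernel f))
    (hcoker : Q (cokernel f)) : IsIso f := by
  have : Epi f := Preadditive.epi_of_cokernel_zero (hB.1 (cokernel.π f) hcoker)
  let S := ShortComplex.mk (kernel.ι f) f (kernel.condition f)
  have hS : S.ShortExact := { exact := ShortComplex.exact_kernel f }
  have : IsSplitEpi f := hB.2 _ f _ hker hS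
  let σ : S.Splitting :=
    ShortComplex.Splitting.ofExactOfSection S hS.exact (section_ f) (IsSplitEpi.id f) hS.mono_f
  have hr : σ.r = 0 := hX σ.r hker
  exact hS.isIso_g_iff.2 ((IsZero.iff_id_eq_zero _).2 (by rw [← σ.f_r, hr, comp_zero]))

end LeftPerpendicular

section Adjunction

variable {𝒟 𝒞 : Type*} [Category 𝒟] [Category 𝒞] {L : 𝒞 ⥤ 𝒟} {G : 𝒟 ⥤ 𝒞}

lemma essImage_le_leftOrthogonal_kernel [HasZeroMorphisms 𝒟] (adj : L ⊣ G) :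
    L.essImage ≤ G.kernel.leftOrthogonal := by
  rintro B ⟨C, ⟨e⟩⟩
  exact G.kernel.leftOrthogonal.prop_of_iso e fun _ _ hK =>
    (adj.homEquiv _ _).injective (IsZero.eq_of_tgt hK _ _)

lemma isSplitEpi_of_essImage_of_isIso_map [L.Full] [L.Faithful] (adj : L ⊣ G) {E B : 𝒟}
    (hB : L.essImage B) (g : E ⟶ B) [IsIso (G.map g)] : IsSplitEpi g := by
  have hg : L.essImage.isColocal g := by
    rw [← L.isoClosure_eq_essImage, ObjectProperty.isoClosure_isColocal,
      ObjectProperty.isColocal_iff_isIso_map adj]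
    infer_instance
  obtain ⟨s, hs⟩ := (hg B hB).2 (𝟙 B)
  exact ⟨⟨s, hs⟩⟩

lemma isEquivalence_essImage_ι_comp [L.Full] [L.Faithful] (adj : L ⊣ G) :
    (L.essImage.ι ⋙ G).IsEquivalence := by
  have : L.toEssImage.IsEquivalence := {}
  have : (L.toEssImage ⋙ L.essImage.ι ⋙ G).IsEquivalence :=
    Functor.isEquivalence_of_iso (F := 𝟭 𝒞) (asIso adj.unit)
  exact Functor.isEquivalence_of_comp_left L.toEssImage _

variable [Abelian 𝒟] [Abelian 𝒞] [PreservesFiniteLimits G] [PreservesFiniteColimits G]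
  [L.Full] [L.Faithful]

lemma essImage_le_leftPerpendicular_kernel (adj : L ⊣ G) :
    L.essImage ≤ leftPerpendicular G.kernel := by
  refine fun B hB => ⟨essImage_le_leftOrthogonal_kernel adj B hB, fun K E f g w hK hS => ?_⟩
  have : IsIso (G.map g) := (hS.map_of_exact G).isIso_g_iff.2 hK
  exact isSplitEpi_of_essImage_of_isIso_map adj hB g

lemma isIso_counit_app_of_leftPerpendicular_kernel (adj : L ⊣ G) {B : 𝒟}
    (hB : leftPerpendicular G.kernel B) : IsIso (adj.counit.app B) := by
  have hε : G.kernel.isoModSerre (adj.counit.app B) := by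
    rw [Abelian.isoModSerre_kernel_eq_inverseImage_isomorphisms]
    exact inferInstanceAs (IsIso (G.map (adj.counit.app B)))
  exact isIso_of_leftOrthogonal_of_leftPerpendicular
    (essImage_le_leftOrthogonal_kernel adj _ (L.obj_mem_essImage _)) hB _ hε.1 hε.2

lemma leftPerpendicular_kernel_eq_essImage (adj : L ⊣ G) :
    leftPerpendicular G.kernel = L.essImage := by
  refine le_antisymm (fun B hB => ?_) (essImage_le_leftPerpendicular_kernel adj)
  have := isIso_counit_app_of_leftPerpendicular_kernel adj hB
  exact adj.mem_essImage_of_counit_isIso B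

end Adjunction

namespace AbelianRecollement

variable {𝒜 ℬ 𝒞 : Type*} [Category 𝒜] [Category ℬ] [Category 𝒞]
  [Abelian 𝒜] [Abelian ℬ] [Abelian 𝒞] (R : AbelianRecollement 𝒜 ℬ 𝒞)

lemma kernel_jStar_eq_essImage_iLow : R.jStar.kernel = R.iLow.essImage := by
  ext X
  constructor
  · intro hX
    have unit_zero : R.adj₄.unit.app X = 0 :=
      (R.adj₄.homEquiv _ _).symm.injective (IsZero.eq_of_src hX _ _)
    obtain ⟨isKernel⟩ := R.exact₁ X
    have : IsIso (R.adj₂.counit.app X) := KernelFork.IsLimit.isIso_ι _ isKernel unit_zero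
    exact R.adj₂.mem_essImage_of_counit_isIso X
  · rintro ⟨A, ⟨e⟩⟩
    exact (R.jStar_iLow_zero A).of_iso (R.jStar.mapIso e.symm)

lemma leftPerpendicular_essImage_iLow :
    leftPerpendicular R.iLow.essImage = R.jShriek.essImage := by
  have := R.jShriek_full
  have := R.jShriek_faithful
  have := R.jStar_preservesFiniteLimits
  have := R.jStar_preservesFiniteColimits
  rw [← R.kernel_jStar_eq_essImage_iLow, leftPerpendicular_kernel_eq_essImage R.adj₃]

lemma isEquivalence_leftPerpendicular_ι_comp_jStar :
    ((leftPerpendicular R.iLow.essImage).ι ⋙ R.jStar).IsEquivalence := by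
  have := R.jShriek_full
  have := R.jShriek_faithful
  rw [R.leftPerpendicular_essImage_iLow]
  exact isEquivalence_essImage_ι_comp R.adj₃

end AbelianRecollement

theorem stmt14_general {𝒜 ℬ 𝒞 : Type*} [Category 𝒜] [Category ℬ] [Category 𝒞]
    [Abelian 𝒜] [Abelian ℬ] [Abelian 𝒞]
    (R : AbelianRecollement 𝒜 ℬ 𝒞)
    (P : ℬ → Prop)
    (hP : ∀ B : ℬ, P B ↔
      ((∀ (A : 𝒜) (f : B ⟶ R.iLow.obj A), f = 0) ∧
        (∀ (A : 𝒜) (E : ℬ) (f : R.iLow.obj A ⟶ E) (g : E ⟶ B) (w : f ≫ g = 0),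
          (ShortComplex.mk f g w).ShortExact → ∃ s : B ⟶ E, s ≫ g = 𝟙 B))) :
    (ObjectProperty.ι P ⋙ R.jStar).Full ∧
    (ObjectProperty.ι P ⋙ R.jStar).Faithful ∧
    (ObjectProperty.ι P ⋙ R.jStar).EssSurj := by
  obtain rfl : P = leftPerpendicular R.iLow.essImage := by
    ext B
    rw [hP, leftPerpendicular_essImage_iff]
  have := R.isEquivalence_leftPerpendicular_ι_comp_jStar
  exact ⟨inferInstance, inferInstance, inferInstance⟩

/-- Let `(𝒜, ℬ, 𝒞)` be a recollement of abelian categories where `𝒞` has enough projectives,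
and let `𝒳 ⊆ ℬ` be the full subcategory of objects `B` with `Hom_ℬ(B, i_* A) = 0` for all
`A : 𝒜` and such that every short exact sequence `0 ⟶ i_* A ⟶ E ⟶ B ⟶ 0` splits.  Then the
restriction of `j^*` to `𝒳` is fully faithful and essentially surjective, i.e. induces an
equivalence `𝒳 ≃ 𝒞`. -/
theorem stmt14 {𝒜 ℬ 𝒞 : Type*} [Category 𝒜] [Category ℬ] [Category 𝒞]
    [Abelian 𝒜] [Abelian ℬ] [Abelian 𝒞]
    (R : AbelianRecollement 𝒜 ℬ 𝒞) [EnoughProjectives 𝒞]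
    (P : ℬ → Prop)
    (hP : ∀ B : ℬ, P B ↔
      ((∀ (A : 𝒜) (f : B ⟶ R.iLow.obj A), f = 0) ∧
        (∀ (A : 𝒜) (E : ℬ) (f : R.iLow.obj A ⟶ E) (g : E ⟶ B) (w : f ≫ g = 0),
          (ShortComplex.mk f g w).ShortExact → ∃ s : B ⟶ E, s ≫ g = 𝟙 B))) :
    (ObjectProperty.ι P ⋙ R.jStar).Full ∧
    (ObjectProperty.ι P ⋙ R.jStar).Faithful ∧
    (ObjectProperty.ι P ⋙ R.jStar).EssSurj :=
  stmt14_general R P hP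
end
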